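/- Let X be a finite non-collinear set of points in ℝ² with the L1 metric. Suppose a ∈ X is not an endpoint of any arrow, the second and fourth quadrants of a are empty, and the first quadrant of a is not empty. Then: (i) the half-line {x(a)}×(y(a),∞) contains points of X; let r be such a point with y(r) minimal; (ii) the half-line (x(a),∞)×{y(a)} contains points of X; let s be such a point with x(s) minimal; (iii) (r,s) is a red arrow; (iv) there exists r' ∈ X with r' ≠ r such that {r,r'} is an increasing pair and (r',s) is a red arrow. -/

import Mathlib

noncomputable section
open Classical

/-- The L1 (Manhattan) metric on ℝ². -/
def rho (u v : ℝ × ℝ) : ℝ := |u.1 - v.1| + |u.2 - v.2|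

/-- `z` is between `u` and `v` (w.r.t. the L1 metric): the three points are
pairwise distinct and `ρ(u,v) = ρ(u,z) + ρ(z,v)`. -/
def MBtw (u z v : ℝ × ℝ) : Prop :=
  u ≠ z ∧ z ≠ v ∧ u ≠ v ∧ rho u v = rho u z + rho z v

/-- The line of `X` induced by distinct points `u, v`. -/
def lineThrough (X : Finset (ℝ × ℝ)) (u v : ℝ × ℝ) : Finset (ℝ × ℝ) :=
  X.filter fun z => z = u ∨ z = v ∨ MBtw u z v ∨ MBtw z u v ∨ MBtw u v z

/-- `X` is non-collinear: no line induced by two distinct points of `X` equals `X`. -/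
def NonCollinear (X : Finset (ℝ × ℝ)) : Prop :=
  ∀ u ∈ X, ∀ v ∈ X, u ≠ v → lineThrough X u v ≠ X

/-- `{p,q}` is an increasing pair. -/
def IncPair (p q : ℝ × ℝ) : Prop := 0 < (q.1 - p.1) * (q.2 - p.2)

/-- `{p,q}` is a decreasing pair. -/
def DecPair (p q : ℝ × ℝ) : Prop := (q.1 - p.1) * (q.2 - p.2) < 0

/-- The partial order `≤_I`. -/
def leI (c d : ℝ × ℝ) : Prop := c.1 ≤ d.1 ∧ c.2 ≤ d.2

/-- `c <_I d`. -/
def ltI (c d : ℝ × ℝ) : Prop := leI c d ∧ c ≠ d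

/-- The partial order `≤_D`. -/
def leD (c d : ℝ × ℝ) : Prop := c.1 ≤ d.1 ∧ d.2 ≤ c.2

/-- `c <_D d`. -/
def ltD (c d : ℝ × ℝ) : Prop := leD c d ∧ c ≠ d

/-- `(p,q)` is a blue arrow of `X`. -/
def BlueArrow (X : Finset (ℝ × ℝ)) (p q : ℝ × ℝ) : Prop :=
  p ∈ X ∧ q ∈ X ∧ IncPair p q ∧ ltI p q ∧
  ∀ a b, a ∈ X → b ∈ X → IncPair a b → ltI a b →
    lineThrough X a b = lineThrough X p q → (ltI q b ∨ (q = b ∧ leI a p))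

/-- `(p,q)` is a red arrow of `X`. -/
def RedArrow (X : Finset (ℝ × ℝ)) (p q : ℝ × ℝ) : Prop :=
  p ∈ X ∧ q ∈ X ∧ DecPair p q ∧ ltD p q ∧
  ∀ a b, a ∈ X → b ∈ X → DecPair a b → ltD a b →
    lineThrough X a b = lineThrough X p q → (ltD q b ∨ (q = b ∧ leD a p))

/-- An arrow is a blue or a red arrow. -/
def Arrow (X : Finset (ℝ × ℝ)) (p q : ℝ × ℝ) : Prop :=
  BlueArrow X p q ∨ RedArrow X p q

/-- `a` is not an endpoint of any arrow of `X`. -/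
def NotEndpoint (X : Finset (ℝ × ℝ)) (a : ℝ × ℝ) : Prop :=
  ∀ p q, Arrow X p q → a ≠ p ∧ a ≠ q

/-!
The line of an increasing pair `{u, v}` consists of the points of `X` that are `≤_I`-comparable to
both `u` and `v`, and it is generated by a blue arrow. Every point is `≤_I`-comparable to `a`, so
the line `⟨a, b⟩` of a minimal point `b` of the first quadrant of `a` is the set of points
`≤_I`-comparable to `b`. The blue arrow `(p, q)` generating it avoids `a`. This forces `q ≤ b` to
lie on a half-line at `a` and to be comparable to the same points as `b`, or else `p`, strictly
below and to the left of `b`, to lie on a half-line. By non-collinearity, the strip between two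
points of `X` on a vertical or horizontal line contains a point of `X` off that line. Together these
facts produce `r` and `s` and show that a point `z` of the first quadrant with `x(z) < x(s)` has
`y(r) < y(z)`, and symmetrically.

The strips between `a` and `s` and between `a` and `r` now contain a point above `r` and to the left
of `s`, and a point `t` below `r` and to the right of `s`. Take for `r'` a `≤_D`-maximal point of
the first kind. If the head of `(c, d)` satisfies `d <_D s`, then `⟨c, d⟩` contains `t`, which is
not on `⟨r', s⟩`; so `(r', s)` is a red arrow.
-/

open Relation Set
open scoped Interval

/-- The open first quadrant of `a`. -/
def firstQuadrant (a : ℝ × ℝ) : Set (ℝ × ℝ) := {z | a.1 < z.1 ∧ a.2 < z.2}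

/-- The open fourth quadrant of `a`. -/
def fourthQuadrant (a : ℝ × ℝ) : Set (ℝ × ℝ) := {z | a.1 < z.1 ∧ z.2 < a.2}

/-- The open vertical half-line `{x(a)} × (y(a), ∞)`. -/
def upRay (a : ℝ × ℝ) : Set (ℝ × ℝ) := {z | z.1 = a.1 ∧ a.2 < z.2}

/-- The open horizontal half-line `(x(a), ∞) × {y(a)}`. -/
def rightRay (a : ℝ × ℝ) : Set (ℝ × ℝ) := {z | z.2 = a.2 ∧ a.1 < z.1}

/-- `r` is the point of `X` on `upRay a` nearest to `a`. -/
structure NearestAbove (X : Finset (ℝ × ℝ)) (a r : ℝ × ℝ) : Prop where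
  mem : r ∈ X
  mem_upRay : r ∈ upRay a
  snd_le : ∀ z ∈ X, z ∈ upRay a → r.2 ≤ z.2

/-- `s` is the point of `X` on `rightRay a` nearest to `a`. -/
structure NearestRight (X : Finset (ℝ × ℝ)) (a s : ℝ × ℝ) : Prop where
  mem : s ∈ X
  mem_rightRay : s ∈ rightRay a
  fst_le : ∀ z ∈ X, z ∈ rightRay a → s.1 ≤ z.1

/-- The part of the hypotheses on `a` that is invariant under `(x, y) ↦ (y, x)`. Emptiness of the
second and fourth quadrants is encoded as comparability in the product order of `ℝ × ℝ`, which is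
`≤_I`. Only blue arrows occur because a point comparable to all others is in no decreasing pair. -/
structure IsBlueIsolated (X : Finset (ℝ × ℝ)) (a : ℝ × ℝ) : Prop where
  nonCollinear : NonCollinear X
  mem : a ∈ X
  comparable : ∀ z ∈ X, SymmGen (· ≤ ·) z a
  not_endpoint : ∀ p q, BlueArrow X p q → a ≠ p ∧ a ≠ q

section Arrows

variable {X : Finset (ℝ × ℝ)} {p q : ℝ × ℝ}

theorem lt_of_mem_firstQuadrant (h : q ∈ firstQuadrant p) : p < q :=
  Prod.lt_iff.2 (Or.inl ⟨h.1, h.2.le⟩)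

theorem incPair_and_ltI_iff : IncPair p q ∧ ltI p q ↔ q ∈ firstQuadrant p := by
  constructor
  · rintro ⟨hinc, ⟨h1, h2⟩, -⟩
    obtain ⟨hx, hy⟩ := mul_ne_zero_iff.1 (ne_of_gt hinc)
    exact ⟨h1.lt_of_ne' (sub_ne_zero.1 hx), h2.lt_of_ne' (sub_ne_zero.1 hy)⟩
  · rintro ⟨h1, h2⟩
    exact ⟨mul_pos (sub_pos.2 h1) (sub_pos.2 h2), ⟨h1.le, h2.le⟩, fun h => h1.ne (congrArg _ h)⟩

theorem decPair_and_ltD_iff : DecPair p q ∧ ltD p q ↔ q ∈ fourthQuadrant p := by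
  constructor
  · rintro ⟨hdec, ⟨h1, h2⟩, -⟩
    obtain ⟨hx, hy⟩ := mul_ne_zero_iff.1 (ne_of_lt hdec)
    exact ⟨h1.lt_of_ne' (sub_ne_zero.1 hx), h2.lt_of_ne (sub_ne_zero.1 hy)⟩
  · rintro ⟨h1, h2⟩
    exact ⟨mul_neg_of_pos_of_neg (sub_pos.2 h1) (sub_neg.2 h2), ⟨h1.le, h2.le⟩,
      fun h => h1.ne (congrArg _ h)⟩

theorem blueArrow_iff : BlueArrow X p q ↔ p ∈ X ∧ q ∈ X ∧ q ∈ firstQuadrant p ∧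
    ∀ c ∈ X, ∀ d ∈ X, d ∈ firstQuadrant c → lineThrough X c d = lineThrough X p q →
      q < d ∨ q = d ∧ c ≤ p := by
  simp only [BlueArrow, ← incPair_and_ltI_iff, lt_iff_le_and_ne]
  constructor
  · rintro ⟨hp, hq, hpq, hlt, h⟩
    exact ⟨hp, hq, ⟨hpq, hlt⟩, fun c hc d hd hcd => h c d hc hd hcd.1 hcd.2⟩
  · rintro ⟨hp, hq, ⟨hpq, hlt⟩, h⟩
    exact ⟨hp, hq, hpq, hlt, fun c d hc hd hcd hclt => h c hc d hd ⟨hcd, hclt⟩⟩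

theorem redArrow_iff : RedArrow X p q ↔ p ∈ X ∧ q ∈ X ∧ q ∈ fourthQuadrant p ∧
    ∀ c ∈ X, ∀ d ∈ X, d ∈ fourthQuadrant c → lineThrough X c d = lineThrough X p q →
      ltD q d ∨ q = d ∧ leD c p := by
  simp only [RedArrow, ← decPair_and_ltD_iff]
  constructor
  · rintro ⟨hp, hq, hpq, hlt, h⟩
    exact ⟨hp, hq, ⟨hpq, hlt⟩, fun c hc d hd hcd => h c d hc hd hcd.1 hcd.2⟩
  · rintro ⟨hp, hq, ⟨hpq, hlt⟩, h⟩
    exact ⟨hp, hq, hpq, hlt, fun c d hc hd hcd hclt => h c hc d hd ⟨hcd, hclt⟩⟩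

end Arrows

section Lines

variable {X : Finset (ℝ × ℝ)} {u v z : ℝ × ℝ}

theorem abs_sub_eq_add_iff_mem_uIcc {G : Type*} [AddCommGroup G] [LinearOrder G]
    [IsOrderedAddMonoid G] {x y z : G} : |x - z| = |x - y| + |y - z| ↔ y ∈ [[x, z]] := by
  rw [mem_uIcc]
  grind

theorem rho_eq_add_iff_mem_uIcc : rho u v = rho u z + rho z v ↔ z ∈ [[u, v]] := by
  rw [uIcc_prod_eq, mem_prod, ← abs_sub_eq_add_iff_mem_uIcc, ← abs_sub_eq_add_iff_mem_uIcc, rho,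
    rho, rho]
  have hx := abs_sub_le u.1 z.1 v.1
  have hy := abs_sub_le u.2 z.2 v.2
  exact ⟨fun h => ⟨by linarith, by linarith⟩, fun ⟨_, _⟩ => by linarith⟩

theorem mem_lineThrough (huv : u ≠ v) :
    z ∈ lineThrough X u v ↔ z ∈ X ∧ (z ∈ [[u, v]] ∨ u ∈ [[z, v]] ∨ v ∈ [[u, z]]) := by
  simp only [lineThrough, MBtw, rho_eq_add_iff_mem_uIcc, Finset.mem_filter]
  refine and_congr_right fun _ => ?_
  by_cases hzu : z = u
  · simp [hzu]
  by_cases hzv : z = v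
  · simp [hzv]
  simp [huv, hzu, hzv, Ne.symm hzu, Ne.symm hzv]

theorem mem_lineThrough_of_mem_firstQuadrant (h : v ∈ firstQuadrant u) :
    z ∈ lineThrough X u v ↔ z ∈ X ∧ SymmGen (· ≤ ·) z u ∧ SymmGen (· ≤ ·) z v := by
  obtain ⟨h1, h2⟩ := h
  rw [mem_lineThrough (ne_of_apply_ne Prod.fst h1.ne)]
  simp only [SymmGen, Prod.le_def, uIcc_prod_eq, mem_prod, mem_uIcc]
  grind

theorem mem_lineThrough_of_mem_fourthQuadrant (h : v ∈ fourthQuadrant u) :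
    z ∈ lineThrough X u v ↔ z ∈ X ∧ SymmGen leD z u ∧ SymmGen leD z v := by
  obtain ⟨h1, h2⟩ := h
  rw [mem_lineThrough (ne_of_apply_ne Prod.fst h1.ne)]
  simp only [SymmGen, leD, uIcc_prod_eq, mem_prod, mem_uIcc]
  grind

theorem left_mem_lineThrough (hu : u ∈ X) : u ∈ lineThrough X u v := by
  simp [lineThrough, hu]

theorem right_mem_lineThrough (hv : v ∈ X) : v ∈ lineThrough X u v := by
  simp [lineThrough, hv]

theorem NonCollinear.exists_between (h : NonCollinear X) (hu : u ∈ X) (hv : v ∈ X)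
    (h2 : u.2 = v.2) (h1 : u.1 < v.1) : ∃ z ∈ X, u.1 < z.1 ∧ z.1 < v.1 ∧ z.2 ≠ u.2 := by
  have huv : u ≠ v := ne_of_apply_ne Prod.fst h1.ne
  by_contra! hn
  refine h u hu v hv huv (Finset.Subset.antisymm (Finset.filter_subset _ _) fun z hz => ?_)
  have := hn z hz
  simp only [mem_lineThrough huv, uIcc_prod_eq, mem_prod, mem_uIcc]
  grind

theorem exists_blueArrow_lineThrough_eq (hu : u ∈ X) (hv : v ∈ X) (huv : v ∈ firstQuadrant u) :
    ∃ p q, BlueArrow X p q ∧ lineThrough X p q = lineThrough X u v := by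
  -- Every head lies on the line and so is comparable to every other head: a minimal head is least.
  -- In the same way a maximal tail for this head is greatest.
  let Generates (c d : ℝ × ℝ) : Prop :=
    d ∈ firstQuadrant c ∧ lineThrough X c d = lineThrough X u v
  obtain ⟨q, hq⟩ := (X.filter fun d => ∃ c ∈ X, Generates c d).exists_minimal
    ⟨v, Finset.mem_filter.2 ⟨hv, u, hu, huv, rfl⟩⟩
  obtain ⟨hqX, p₀, hp₀, hgen₀⟩ := Finset.mem_filter.1 hq.prop
  obtain ⟨p, hp⟩ := (X.filter fun c => Generates c q).exists_maximal
    ⟨p₀, Finset.mem_filter.2 ⟨hp₀, hgen₀⟩⟩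
  obtain ⟨hpX, hpq, hline⟩ := Finset.mem_filter.1 hp.prop
  refine ⟨p, q, blueArrow_iff.2 ⟨hpX, hqX, hpq, fun c hc d hd hcd hcdline => ?_⟩, hline⟩
  have hgen : Generates c d := ⟨hcd, hcdline.trans hline⟩
  have hc_comp := hcdline ▸ left_mem_lineThrough (v := d) hc
  have hd_comp := hcdline ▸ right_mem_lineThrough (u := c) hd
  rw [mem_lineThrough_of_mem_firstQuadrant hpq] at hc_comp hd_comp
  have hqd : q ≤ d := hd_comp.2.2.elim
    (hq.le_of_le (Finset.mem_filter.2 ⟨hd, c, hc, hgen⟩)) id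
  rcases hqd.lt_or_eq with hlt | rfl
  · exact Or.inl hlt
  · exact Or.inr ⟨rfl, hc_comp.2.1.elim id (hp.le_of_ge (Finset.mem_filter.2 ⟨hc, hgen⟩))⟩

end Lines

section Transpose

variable {X : Finset (ℝ × ℝ)} {a p q r s u v z : ℝ × ℝ}

/-- The reflection of `X` in the diagonal. It preserves increasing pairs and blue arrows and
exchanges the two half-lines at a point, so one of two symmetric facts follows from the other. -/
def transpose (X : Finset (ℝ × ℝ)) : Finset (ℝ × ℝ) :=
  X.map (Equiv.prodComm ℝ ℝ).toEmbedding

@[simp]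
theorem mem_transpose : z ∈ transpose X ↔ z.swap ∈ X :=
  Finset.mem_map_equiv

theorem swap_mem_transpose : z.swap ∈ transpose X ↔ z ∈ X := by
  simp

theorem transpose_injective : Function.Injective transpose :=
  Finset.map_injective _

theorem mbtw_swap : MBtw u.swap z.swap v.swap ↔ MBtw u z v := by
  simp [MBtw, rho, add_comm, Prod.swap_inj]

theorem lineThrough_transpose :
    lineThrough (transpose X) u v = transpose (lineThrough X u.swap v.swap) := by
  ext z
  simp [lineThrough, mbtw_swap, Prod.swap_inj]

theorem NonCollinear.transpose (h : NonCollinear X) : NonCollinear (transpose X) := by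
  intro u hu v hv huv hline
  rw [lineThrough_transpose] at hline
  exact h _ (mem_transpose.1 hu) _ (mem_transpose.1 hv) (Prod.swap_injective.ne huv)
    (transpose_injective hline)

theorem BlueArrow.of_transpose (h : BlueArrow (transpose X) p q) : BlueArrow X p.swap q.swap := by
  obtain ⟨hp, hq, hpq, hmin⟩ := blueArrow_iff.1 h
  refine blueArrow_iff.2 ⟨mem_transpose.1 hp, mem_transpose.1 hq, hpq.symm,
    fun c hc d hd hcd hline => ?_⟩
  have := hmin c.swap (swap_mem_transpose.2 hc) d.swap (swap_mem_transpose.2 hd) hcd.symm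
    (by simp only [lineThrough_transpose, Prod.swap_swap, hline])
  rwa [← Prod.swap_lt_swap, ← Prod.swap_le_swap, ← Prod.swap_inj, Prod.swap_swap,
    Prod.swap_swap] at this

theorem IsBlueIsolated.transpose (h : IsBlueIsolated X a) :
    IsBlueIsolated (transpose X) a.swap where
  nonCollinear := h.nonCollinear.transpose
  mem := swap_mem_transpose.2 h.mem
  comparable z hz := (h.comparable _ (mem_transpose.1 hz)).imp Prod.swap_le_swap.1
    Prod.swap_le_swap.1
  not_endpoint p q hpq := (h.not_endpoint _ _ hpq.of_transpose).imp (mt fun e => by simp [← e])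
    (mt fun e => by simp [← e])

theorem NearestAbove.transpose (h : NearestAbove X a r) :
    NearestRight (transpose X) a.swap r.swap :=
  ⟨swap_mem_transpose.2 h.mem, h.mem_upRay, fun z hz => h.snd_le z.swap (mem_transpose.1 hz)⟩

theorem NearestRight.transpose (h : NearestRight X a s) :
    NearestAbove (transpose X) a.swap s.swap :=
  ⟨swap_mem_transpose.2 h.mem, h.mem_rightRay, fun z hz => h.fst_le z.swap (mem_transpose.1 hz)⟩

end Transpose

section BlueIsolated

variable {X : Finset (ℝ × ℝ)} {a b p q r s w z : ℝ × ℝ}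

theorem mem_upRay_or_mem_rightRay_of_lt (h : a < z) (hz : z ∉ firstQuadrant a) :
    z ∈ upRay a ∨ z ∈ rightRay a := by
  rcases Prod.lt_iff.1 h with ⟨h1, h2⟩ | ⟨h1, h2⟩
  · exact Or.inr ⟨(h2.eq_or_lt.resolve_right fun h2 => hz ⟨h1, h2⟩).symm, h1⟩
  · exact Or.inl ⟨(h1.eq_or_lt.resolve_right fun h1 => hz ⟨h1, h2⟩).symm, h2⟩

namespace IsBlueIsolated

theorem le_of_fst_lt (h : IsBlueIsolated X a) (hz : z ∈ X) (haz : a.1 < z.1) : a ≤ z :=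
  (h.comparable z hz).resolve_left fun hle => haz.not_ge hle.1

theorem mem_lineThrough_iff (h : IsBlueIsolated X a) (hb : b ∈ firstQuadrant a) (hz : z ∈ X) :
    z ∈ lineThrough X a b ↔ SymmGen (· ≤ ·) z b := by
  simp [mem_lineThrough_of_mem_firstQuadrant hb, hz, h.comparable z hz]

theorem mem_lineThrough_of_le (h : IsBlueIsolated X a) (hb : b ∈ firstQuadrant a) (hz : z ∈ X)
    (hza : z ≤ a) : z ∈ lineThrough X a b :=
  (h.mem_lineThrough_iff hb hz).2 (Or.inl (hza.trans (lt_of_mem_firstQuadrant hb).le))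

theorem lt_head (h : IsBlueIsolated X a) (hb : b ∈ firstQuadrant a) (hpq : BlueArrow X p q)
    (hline : lineThrough X p q = lineThrough X a b) : a < q := by
  obtain ⟨hp, hq, hqp, -⟩ := blueArrow_iff.1 hpq
  refine ((h.comparable q hq).resolve_left fun hqa => ?_).lt_of_ne (h.not_endpoint p q hpq).2
  have hpq' := lt_of_mem_firstQuadrant hqp
  refine h.nonCollinear p hp q hq hpq'.ne
    (Finset.Subset.antisymm (Finset.filter_subset _ _) fun z hz => ?_)
  rcases h.comparable z hz with hza | haz
  · exact hline ▸ h.mem_lineThrough_of_le hb hz hza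
  · exact (mem_lineThrough_of_mem_firstQuadrant hqp).2
      ⟨hz, Or.inr (hpq'.le.trans (hqa.trans haz)), Or.inr (hqa.trans haz)⟩

theorem comparable_tail (h : IsBlueIsolated X a) (hb : b ∈ firstQuadrant a)
    (hqp : q ∈ firstQuadrant p) (hline : lineThrough X p q = lineThrough X a b) (hpa : p ≤ a)
    (hz : z ∈ X) : SymmGen (· ≤ ·) z p := by
  rcases h.comparable z hz with hza | haz
  · have hzl := hline ▸ h.mem_lineThrough_of_le hb hz hza
    exact ((mem_lineThrough_of_mem_firstQuadrant hqp).1 hzl).2.1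
  · exact Or.inr (hpa.trans haz)

theorem head_notMem_firstQuadrant (h : IsBlueIsolated X a) (hb : b ∈ firstQuadrant a)
    (hpq : BlueArrow X p q) (hline : lineThrough X p q = lineThrough X a b) (hpa : p ≤ a) :
    q ∉ firstQuadrant a := by
  obtain ⟨-, hq, hqp, hmin⟩ := blueArrow_iff.1 hpq
  intro hqa
  have hline' : lineThrough X a q = lineThrough X p q := by
    ext z
    rw [mem_lineThrough_of_mem_firstQuadrant hqa, mem_lineThrough_of_mem_firstQuadrant hqp]
    refine and_congr_right fun hz => ?_
    simp only [h.comparable z hz, h.comparable_tail hb hqp hline hpa hz]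
  rcases hmin a h.mem q hq hqa hline' with hlt | ⟨-, hap⟩
  · exact lt_irrefl q hlt
  · exact (h.not_endpoint p q hpq).1 (le_antisymm hap hpa)

/-- The witness is the head or the tail of the blue arrow generating `⟨a, b⟩`. -/
theorem exists_mem_ray_of_minimal (h : IsBlueIsolated X a)
    (hb : Minimal (fun z => z ∈ X ∧ z ∈ firstQuadrant a) b) :
    (∃ q ∈ X, (q ∈ upRay a ∨ q ∈ rightRay a) ∧ q ≤ b ∧
      ∀ z ∈ X, SymmGen (· ≤ ·) z q ↔ SymmGen (· ≤ ·) z b) ∨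
    ∃ p ∈ X, (p ∈ upRay a ∨ p ∈ rightRay a) ∧ b ∈ firstQuadrant p := by
  obtain ⟨hbX, hba⟩ := hb.prop
  obtain ⟨p, q, hpq, hline⟩ := exists_blueArrow_lineThrough_eq h.mem hbX hba
  have haq : a < q := h.lt_head hba hpq hline
  obtain ⟨hp, hq, hqp, hmin⟩ := blueArrow_iff.1 hpq
  have hqb : q ≤ b := (hmin a h.mem b hbX hba hline.symm).elim le_of_lt fun e => e.1.le
  rcases h.comparable p hp with hpa | hap
  · refine Or.inl ⟨q, hq, mem_upRay_or_mem_rightRay_of_lt haq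
      (h.head_notMem_firstQuadrant hba hpq hline hpa), hqb, fun z hz => ?_⟩
    rw [← h.mem_lineThrough_iff hba hz, ← hline, mem_lineThrough_of_mem_firstQuadrant hqp]
    simp only [hz, h.comparable_tail hba hqp hline hpa hz, true_and]
  · have hqa : q ∈ firstQuadrant a := ⟨hap.1.trans_lt hqp.1, hap.2.trans_lt hqp.2⟩
    obtain rfl : q = b := hb.eq_of_le ⟨hq, hqa⟩ hqb
    have hpa : p ∉ firstQuadrant a := fun hpa =>
      (lt_of_mem_firstQuadrant hqp).not_ge
        (hb.le_of_le ⟨hp, hpa⟩ (lt_of_mem_firstQuadrant hqp).le)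
    exact Or.inr ⟨p, hp, mem_upRay_or_mem_rightRay_of_lt
      (hap.lt_of_ne (h.not_endpoint p q hpq).1) hpa, hqp⟩

theorem exists_upRay_lt_or_rightRay_le_of_minimal (h : IsBlueIsolated X a)
    (hb : Minimal (fun z => z ∈ X ∧ z ∈ firstQuadrant a) b) :
    (∃ t ∈ X, t ∈ upRay a ∧ t.2 < b.2) ∨ ∃ t ∈ X, t ∈ rightRay a ∧ t.1 ≤ b.1 := by
  obtain ⟨hbX, hba⟩ := hb.prop
  rcases h.exists_mem_ray_of_minimal hb with
    ⟨q, hq, hqup | hqright, hqb, hcomp⟩ | ⟨p, hp, hpup | hpright, hpb⟩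
  · rcases hqb.2.lt_or_eq with hlt | heq
    · exact Or.inl ⟨q, hq, hqup, hlt⟩
    obtain ⟨z, hz, hqz, hzb, hne⟩ :=
      h.nonCollinear.exists_between hq hbX heq (hqup.1.trans_lt hba.1)
    have haz1 : a.1 < z.1 := hqup.1 ▸ hqz
    -- A point above the segment from `q` to `b` would be comparable to `q` but not to `b`.
    have hzb2 : z.2 < b.2 := by
      rw [← heq]
      refine hne.lt_or_gt.resolve_right fun hgt => ?_
      rcases (hcomp z hz).1 (Or.inr ⟨hqz.le, hgt.le⟩) with hle | hle
      · exact (heq ▸ hgt).not_ge hle.2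
      · exact hzb.not_ge hle.1
    have haz : z ∉ firstQuadrant a := fun haz =>
      hzb.not_ge (hb.le_of_le ⟨hz, haz⟩ ⟨hzb.le, hzb2.le⟩).1
    have haz2 : z.2 = a.2 :=
      ((h.le_of_fst_lt hz haz1).2.eq_or_lt.resolve_right fun h2 => haz ⟨haz1, h2⟩).symm
    exact Or.inr ⟨z, hz, ⟨haz2, haz1⟩, hzb.le⟩
  · exact Or.inr ⟨q, hq, hqright, hqb.1⟩
  · exact Or.inl ⟨p, hp, hpup, hpb.2⟩
  · exact Or.inr ⟨p, hp, hpright, hpb.1.le⟩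

theorem exists_upRay_lt_or_rightRay_le (h : IsBlueIsolated X a) (hw : w ∈ X)
    (hwa : w ∈ firstQuadrant a) :
    (∃ t ∈ X, t ∈ upRay a ∧ t.2 < w.2) ∨ ∃ t ∈ X, t ∈ rightRay a ∧ t.1 ≤ w.1 := by
  obtain ⟨b, hbw, hb⟩ := (X.filter (· ∈ firstQuadrant a)).exists_le_minimal
    (Finset.mem_filter.2 ⟨hw, hwa⟩)
  simp only [Finset.mem_filter] at hb
  rcases h.exists_upRay_lt_or_rightRay_le_of_minimal hb with ⟨t, ht, hta, htb⟩ | ⟨t, ht, hta, htb⟩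
  · exact Or.inl ⟨t, ht, hta, htb.trans_le hbw.2⟩
  · exact Or.inr ⟨t, ht, hta, htb.trans hbw.1⟩

theorem exists_mem_upRay (h : IsBlueIsolated X a) (hQ : ∃ z ∈ X, z ∈ firstQuadrant a) :
    ∃ z ∈ X, z ∈ upRay a := by
  obtain ⟨z, hz, hza⟩ := hQ
  obtain ⟨w, hw, hleft⟩ := (X.filter (· ∈ firstQuadrant a)).exists_min_image Prod.fst
    ⟨z, Finset.mem_filter.2 ⟨hz, hza⟩⟩
  obtain ⟨hwX, hwa⟩ := Finset.mem_filter.1 hw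
  rcases h.exists_upRay_lt_or_rightRay_le hwX hwa with ⟨t, ht, hta, -⟩ | ⟨t, ht, hta, htw⟩
  · exact ⟨t, ht, hta⟩
  · obtain ⟨y, hy, hay, hyt, hne⟩ := h.nonCollinear.exists_between h.mem ht hta.1.symm hta.2
    have hya : y ∈ firstQuadrant a := ⟨hay, (h.le_of_fst_lt hy hay).2.lt_of_ne' hne⟩
    exact absurd (hleft y (Finset.mem_filter.2 ⟨hy, hya⟩)) (hyt.trans_le htw).not_ge

theorem exists_mem_rightRay (h : IsBlueIsolated X a) (hQ : ∃ z ∈ X, z ∈ firstQuadrant a) :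
    ∃ z ∈ X, z ∈ rightRay a := by
  obtain ⟨z, hz, hza⟩ := hQ
  obtain ⟨t, ht, hta⟩ := h.transpose.exists_mem_upRay ⟨z.swap, swap_mem_transpose.2 hz, hza.symm⟩
  exact ⟨t.swap, mem_transpose.1 ht, hta⟩

theorem snd_lt_of_fst_lt (h : IsBlueIsolated X a) (hr : NearestAbove X a r)
    (hs : NearestRight X a s) (hz : z ∈ X) (hza : z ∈ firstQuadrant a) (hzs : z.1 < s.1) :
    r.2 < z.2 := by
  rcases h.exists_upRay_lt_or_rightRay_le hz hza with ⟨t, ht, hta, htz⟩ | ⟨t, ht, hta, htz⟩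
  · exact (hr.snd_le t ht hta).trans_lt htz
  · exact absurd (hs.fst_le t ht hta) (htz.trans_lt hzs).not_ge

theorem fst_lt_of_snd_lt (h : IsBlueIsolated X a) (hr : NearestAbove X a r)
    (hs : NearestRight X a s) (hz : z ∈ X) (hza : z ∈ firstQuadrant a) (hzr : z.2 < r.2) :
    s.1 < z.1 :=
  h.transpose.snd_lt_of_fst_lt hs.transpose hr.transpose (swap_mem_transpose.2 hz) hza.symm hzr

theorem exists_above_nearestAbove (h : IsBlueIsolated X a) (hr : NearestAbove X a r)
    (hs : NearestRight X a s) : ∃ w ∈ X, a.1 < w.1 ∧ w.1 < s.1 ∧ r.2 < w.2 := by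
  obtain ⟨w, hw, haw, hws, hne⟩ :=
    h.nonCollinear.exists_between h.mem hs.mem hs.mem_rightRay.1.symm hs.mem_rightRay.2
  have hwa : w ∈ firstQuadrant a := ⟨haw, (h.le_of_fst_lt hw haw).2.lt_of_ne' hne⟩
  exact ⟨w, hw, haw, hws, h.snd_lt_of_fst_lt hr hs hw hwa hws⟩

theorem exists_right_of_nearestRight (h : IsBlueIsolated X a) (hr : NearestAbove X a r)
    (hs : NearestRight X a s) : ∃ t ∈ X, a.2 < t.2 ∧ t.2 < r.2 ∧ s.1 < t.1 := by
  obtain ⟨t, ht, hat, htr, hst⟩ := h.transpose.exists_above_nearestAbove hs.transpose hr.transpose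
  exact ⟨t.swap, mem_transpose.1 ht, hat, htr, hst⟩

end IsBlueIsolated

end BlueIsolated

section RedArrows

variable {X : Finset (ℝ × ℝ)} {a c d r r' s t : ℝ × ℝ}

theorem symmGen_le_of_empty_quadrants {z : ℝ × ℝ} (h2 : ¬(z.1 < a.1 ∧ a.2 < z.2))
    (h4 : ¬(a.1 < z.1 ∧ z.2 < a.2)) : SymmGen (· ≤ ·) z a := by
  simp only [SymmGen, Prod.le_def]
  grind

theorem mem_rays_of_symmGen_leD (hc : SymmGen (· ≤ ·) c a) (hd : SymmGen (· ≤ ·) d a)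
    (hcd : d ∈ fourthQuadrant c) (hac : SymmGen leD a c) (had : SymmGen leD a d) :
    (c ∈ upRay a ∧ d ∈ rightRay a) ∨ (a ∈ rightRay c ∧ a ∈ upRay d) := by
  simp only [SymmGen, leD, Prod.le_def, fourthQuadrant, upRay, rightRay, mem_ofPred_eq] at *
  grind

theorem redArrow_of_nearest (ha : a ∈ X) (hcomp : ∀ z ∈ X, SymmGen (· ≤ ·) z a)
    (hr : NearestAbove X a r) (hs : NearestRight X a s) : RedArrow X r s := by
  obtain ⟨hrX, ⟨hra, har⟩, hrmin⟩ := hr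
  obtain ⟨hsX, ⟨hsa, has⟩, hsmin⟩ := hs
  have hrs : s ∈ fourthQuadrant r := ⟨hra.trans_lt has, hsa.trans_lt har⟩
  refine redArrow_iff.2 ⟨hrX, hsX, hrs, fun c hc d hd hcd hline => ?_⟩
  have haline : a ∈ lineThrough X c d := by
    rw [hline, mem_lineThrough_of_mem_fourthQuadrant hrs]
    exact ⟨ha, Or.inr ⟨hra.le, har.le⟩, Or.inl ⟨has.le, hsa.le⟩⟩
  have hcline : c ∈ lineThrough X r s := hline ▸ left_mem_lineThrough hc
  rw [mem_lineThrough_of_mem_fourthQuadrant hcd] at haline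
  rw [mem_lineThrough_of_mem_fourthQuadrant hrs] at hcline
  rcases mem_rays_of_symmGen_leD (hcomp c hc) (hcomp d hd) hcd haline.2.1 haline.2.2 with
    ⟨hcup, hdright⟩ | ⟨hcleft, -⟩
  · have hsd : leD s d := ⟨hsmin d hd hdright, (hdright.1.trans hsa.symm).le⟩
    have hcr : leD c r := ⟨(hcup.1.trans hra.symm).le, hrmin c hc hcup⟩
    exact (eq_or_ne s d).symm.imp (fun hne => ⟨hsd, hne⟩) fun heq => ⟨heq, hcr⟩
  · rcases hcline.2.1 with hcr | hrc
    · exact absurd hcr.2 (hcleft.1 ▸ har).not_ge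
    · exact absurd hrc.1 (hra ▸ hcleft.2).not_ge

namespace IsBlueIsolated

theorem mem_lineThrough_of_leD_right (h : IsBlueIsolated X a) (hr : NearestAbove X a r)
    (hs : NearestRight X a s) (hc : c ∈ X) (hd : d ∈ X) (hcd : d ∈ fourthQuadrant c)
    (hds : leD d s) (hne : d ≠ s) (ht : t ∈ X) (hst : s.1 < t.1) (htr : t.2 < r.2) :
    t ∈ lineThrough X c d := by
  have had2 : a.2 ≤ d.2 := hs.mem_rightRay.1 ▸ hds.2
  have hac : a ≤ c := (h.comparable c hc).resolve_left fun hca =>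
    (had2.trans_lt hcd.2).not_ge hca.2
  have had1 : a.1 < d.1 := hac.1.trans_lt hcd.1
  have hda : d ∈ firstQuadrant a := by
    refine ⟨had1, had2.lt_of_ne fun heq => hne (Prod.ext ?_ ?_)⟩
    · exact hds.1.antisymm (hs.fst_le d hd ⟨heq.symm, had1⟩)
    · exact heq.symm.trans hs.mem_rightRay.1.symm
  have hrd : r.2 ≤ d.2 := not_lt.1 fun hdr => (h.fst_lt_of_snd_lt hr hs hd hda hdr).not_ge hds.1
  have hdt1 : d.1 ≤ t.1 := hds.1.trans hst.le
  have htd2 : t.2 ≤ d.2 := htr.le.trans hrd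
  exact (mem_lineThrough_of_mem_fourthQuadrant hcd).2
    ⟨ht, Or.inr ⟨hcd.1.le.trans hdt1, htd2.trans hcd.2.le⟩, Or.inr ⟨hdt1, htd2⟩⟩

theorem redArrow_of_maximal (h : IsBlueIsolated X a) (hr : NearestAbove X a r)
    (hs : NearestRight X a s) (hr'X : r' ∈ X) (har' : a.1 < r'.1) (hr's : r'.1 < s.1)
    (hrr' : r.2 < r'.2)
    (hmax : ∀ z ∈ X, a.1 < z.1 → z.1 < s.1 → r.2 < z.2 → leD r' z → leD z r') :
    RedArrow X r' s := by
  have hsa : s.2 = a.2 := hs.mem_rightRay.1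
  have hs4 : s ∈ fourthQuadrant r' := ⟨hr's, hsa.trans_lt (hr.mem_upRay.2.trans hrr')⟩
  refine redArrow_iff.2 ⟨hr'X, hs.mem, hs4, fun c hc d hd hcd hline => ?_⟩
  have hcline : c ∈ lineThrough X r' s := hline ▸ left_mem_lineThrough hc
  have hdline : d ∈ lineThrough X r' s := hline ▸ right_mem_lineThrough hd
  rw [mem_lineThrough_of_mem_fourthQuadrant hs4] at hcline hdline
  rcases eq_or_ne s d with rfl | hne
  · refine Or.inr ⟨rfl, hcline.2.1.elim id fun hr'c => ?_⟩
    have hca : c ∈ firstQuadrant a := ⟨har'.trans_le hr'c.1, hsa ▸ hcd.2⟩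
    exact hmax c hc hca.1 hcd.1 (h.snd_lt_of_fst_lt hr hs hc hca hcd.1) hr'c
  · refine Or.inl ⟨hdline.2.2.resolve_left fun hds => ?_, hne⟩
    obtain ⟨t, ht, hat, htr, hst⟩ := h.exists_right_of_nearestRight hr hs
    have htline := hline ▸ h.mem_lineThrough_of_leD_right hr hs hc hd hcd hds hne.symm ht hst htr
    rw [mem_lineThrough_of_mem_fourthQuadrant hs4] at htline
    rcases htline.2.2 with hts | hst'
    · exact hst.not_ge hts.1
    · exact (hsa ▸ hat).not_ge hst'.2

theorem exists_redArrow (h : IsBlueIsolated X a) (hr : NearestAbove X a r)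
    (hs : NearestRight X a s) : ∃ r' ∈ X, r' ≠ r ∧ IncPair r r' ∧ RedArrow X r' s := by
  obtain ⟨w, hw, haw, hws, hrw⟩ := h.exists_above_nearestAbove hr hs
  -- `z.1 - z.2` is strictly monotone for `≤_D`, so its maximizers are `≤_D`-maximal.
  obtain ⟨r', hr', hmax⟩ := (X.filter fun z => a.1 < z.1 ∧ z.1 < s.1 ∧ r.2 < z.2).exists_max_image
    (fun z => z.1 - z.2) ⟨w, Finset.mem_filter.2 ⟨hw, haw, hws, hrw⟩⟩
  obtain ⟨hr'X, har', hr's, hrr'⟩ := Finset.mem_filter.1 hr'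
  have hquad : r' ∈ firstQuadrant r := ⟨hr.mem_upRay.1.trans_lt har', hrr'⟩
  refine ⟨r', hr'X, (lt_of_mem_firstQuadrant hquad).ne', (incPair_and_ltI_iff.2 hquad).1,
    h.redArrow_of_maximal hr hs hr'X har' hr's hrr' fun z hz haz hzs hrz ⟨h1, h2⟩ => ?_⟩
  have := hmax z (Finset.mem_filter.2 ⟨hz, haz, hzs, hrz⟩)
  exact ⟨by linarith, by linarith⟩

end IsBlueIsolated

end RedArrows

/-- If `a` is not an endpoint of any arrow, its second and fourth quadrants are
empty and its first quadrant is not, then there are points of `X` directly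
above `a` and directly to the right of `a`; the closest point `r` above `a` and
the closest point `s` to the right of `a` form a red arrow `(r,s)`, and there
is another red arrow `(r',s)` with `r' ≠ r` and `{r,r'}` an increasing pair. -/
theorem two_red_arrows_two_empty_quadrants (X : Finset (ℝ × ℝ)) (a : ℝ × ℝ)
    (hnc : NonCollinear X) (haX : a ∈ X) (hiso : NotEndpoint X a)
    (hQ2 : ∀ z ∈ X, ¬(z.1 < a.1 ∧ a.2 < z.2))
    (hQ4 : ∀ z ∈ X, ¬(a.1 < z.1 ∧ z.2 < a.2))
    (hQ1 : ∃ z ∈ X, a.1 < z.1 ∧ a.2 < z.2) :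
    (∃ z ∈ X, z.1 = a.1 ∧ a.2 < z.2) ∧
    (∃ z ∈ X, z.2 = a.2 ∧ a.1 < z.1) ∧
    ∀ r s : ℝ × ℝ,
      (r ∈ X ∧ r.1 = a.1 ∧ a.2 < r.2 ∧ ∀ z ∈ X, z.1 = a.1 → a.2 < z.2 → r.2 ≤ z.2) →
      (s ∈ X ∧ s.2 = a.2 ∧ a.1 < s.1 ∧ ∀ z ∈ X, z.2 = a.2 → a.1 < z.1 → s.1 ≤ z.1) →
      RedArrow X r s ∧
        ∃ r' ∈ X, r' ≠ r ∧ IncPair r r' ∧ RedArrow X r' s := by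
  have h : IsBlueIsolated X a :=
    ⟨hnc, haX, fun z hz => symmGen_le_of_empty_quadrants (hQ2 z hz) (hQ4 z hz),
      fun p q hpq => hiso p q (Or.inl hpq)⟩
  refine ⟨h.exists_mem_upRay hQ1, h.exists_mem_rightRay hQ1, ?_⟩
  rintro r s ⟨hrX, hra, har, hrmin⟩ ⟨hsX, hsa, has, hsmin⟩
  have hr : NearestAbove X a r := ⟨hrX, ⟨hra, har⟩, fun z hz hza => hrmin z hz hza.1 hza.2⟩
  have hs : NearestRight X a s := ⟨hsX, ⟨hsa, has⟩, fun z hz hza => hsmin z hz hza.1 hza.2⟩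
  exact ⟨redArrow_of_nearest haX h.comparable hr hs, h.exists_redArrow hr hs⟩
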